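/- For any primitive P on a finite product 𝒳×𝒴, the leakage of P is at least the leakage of the primitive of its dependent parts: Δ_P ≥ Δ_{P↘}, where P↘ is the joint distribution of the pair (f_X(X), f_Y(Y)), i.e. the distribution on the (finite) image of f_X times the image of f_Y given by P↘(k,l) = Σ_{x,y : f_X(x)=k, f_Y(y)=l} P(x,y). -/

import Mathlib

open scoped BigOperators
open Matrix

noncomputable section

open scoped Classical in
/-- Base-2 von Neumann entropy of a matrix: minus the sum of `λ·log₂ λ` over the real
eigenvalues (with multiplicity) if the matrix is Hermitian, and `0` otherwise. -/
def vNE {n : Type*} [Fintype n] (ρ : Matrix n n ℂ) : ℝ :=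
  if h : ρ.IsHermitian then -∑ i, h.eigenvalues i * Real.logb 2 (h.eigenvalues i) else 0

/-- Shannon entropy (base 2), with the convention `0·log₂ 0 = 0`. -/
def shannon {α : Type*} [Fintype α] (p : α → ℝ) : ℝ :=
  -∑ a, p a * Real.logb 2 (p a)

/-- Marginal on the first component: `P_X`. -/
def margX {X Y : Type*} [Fintype Y] (P : X × Y → ℝ) (x : X) : ℝ := ∑ y, P (x, y)

/-- Marginal on the second component: `P_Y`. -/
def margY {X Y : Type*} [Fintype X] (P : X × Y → ℝ) (y : Y) : ℝ := ∑ x, P (x, y)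

/-- Mutual information `I(X;Y)` of a joint distribution `P` (base 2). -/
def mutualInfo {X Y : Type*} [Fintype X] [Fintype Y] (P : X × Y → ℝ) : ℝ :=
  ∑ x, ∑ y, P (x, y) * Real.logb 2 (P (x, y) / (margX P x * margY P y))

/-- The regular embedding `ψ_θ(x,y) = e^{iθ(x,y)}·√(P(x,y))`. -/
def regEmb {X Y : Type*} (P θ : X × Y → ℝ) (xy : X × Y) : ℂ :=
  Complex.exp (Complex.I * θ xy) * (Real.sqrt (P xy) : ℂ)

/-- Reduced density matrix `ρ_A(θ)` of the regular embedding `ψ_θ`. -/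
def rhoA {X Y : Type*} [Fintype Y] (P θ : X × Y → ℝ) : Matrix X X ℂ :=
  Matrix.of fun x x' => ∑ y, regEmb P θ (x, y) * star (regEmb P θ (x', y))

/-- Reduced density matrix `ρ_B(θ)` of the regular embedding `ψ_θ`. -/
def rhoB {X Y : Type*} [Fintype X] (P θ : X × Y → ℝ) : Matrix Y Y ℂ :=
  Matrix.of fun y y' => ∑ x, regEmb P θ (x, y) * star (regEmb P θ (x, y'))

/-- Leakage `Δ(ψ_θ) = S(ρ_B(θ)) − I(X;Y)` of a regular embedding. -/
def leakReg {X Y : Type*} [Fintype X] [Fintype Y] (P θ : X × Y → ℝ) : ℝ :=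
  vNE (rhoB P θ) - mutualInfo P

/-- Leakage `Δ_P` of a primitive: the infimum of the leakage over all phase functions. -/
def leakPrim {X Y : Type*} [Fintype X] [Fintype Y] (P : X × Y → ℝ) : ℝ :=
  ⨅ θ : X × Y → ℝ, leakReg P θ

/-- `f_X(x) = P_{Y|X=x}`, the conditional distribution of `Y` given `X = x`. -/
def fX {X Y : Type*} [Fintype Y] (P : X × Y → ℝ) (x : X) : Y → ℝ :=
  fun y => P (x, y) / margX P x

/-- `f_Y(y) = P_{X|Y=y}`, the conditional distribution of `X` given `Y = y`. -/
def fY {X Y : Type*} [Fintype X] (P : X × Y → ℝ) (y : Y) : X → ℝ :=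
  fun x => P (x, y) / margY P y

open scoped Classical in
/-- Shannon entropy `H(P_{f_X(X),Y})` of the joint distribution of the pair `(f_X(X), Y)`. -/
def entDepJoint {X Y : Type*} [Fintype X] [Fintype Y] (P : X × Y → ℝ) : ℝ :=
  -∑ k ∈ Finset.image (fX P) Finset.univ, ∑ y,
      (∑ x ∈ Finset.univ.filter fun x => fX P x = k, P (x, y)) *
        Real.logb 2 (∑ x ∈ Finset.univ.filter fun x => fX P x = k, P (x, y))

/-- Conditional Shannon entropy `H(X↘Y|Y) = H(P_{f_X(X),Y}) − H(P_Y)`. -/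
def condEntDep {X Y : Type*} [Fintype X] [Fintype Y] (P : X × Y → ℝ) : ℝ :=
  entDepJoint P - shannon (margY P)

open scoped Classical in
/-- The primitive `P↘` of the dependent parts: the joint distribution of
`(f_X(X), f_Y(Y))`, on the image of `f_X` times the image of `f_Y`. -/
def depPrim {𝒳 𝒴 : Type*} [Fintype 𝒳] [Fintype 𝒴] (P : 𝒳 × 𝒴 → ℝ) :
    (↥(Finset.image (fX P) Finset.univ) × ↥(Finset.image (fY P) Finset.univ)) → ℝ :=
  fun kl => ∑ x ∈ Finset.univ.filter fun x => fX P x = (kl.1 : 𝒴 → ℝ),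
      ∑ y ∈ Finset.univ.filter fun y => fY P y = (kl.2 : 𝒳 → ℝ), P (x, y)

/-!
Merging symbols `x` with the same conditional distribution can be undone by splitting: if
`f x = f x'` forces `P_{Y|x} = P_{Y|x'}`, then `P(x, y) = w x * Q(f x, y)`, where `Q` is the merged
distribution and `w x` the conditional probability of `x` within its fibre. Then `P` and `Q` have
the same mutual information, while `ρ_B` for `P` with phases `θ` is `∑ x, w x • |v_x⟩⟨v_x|`, where
`v_x` carries the amplitudes of the row `f x` of `Q` and the phases of the row `x` of `θ`. This is
a mixture, over the choices of one `x` from each fibre, of states `ρ_B` for `Q`. By concavity of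
the von Neumann entropy one of these choices has entropy at most that of the mixture, so merging
does not increase the leakage. The leakage is symmetric in the two parties since `ρ_A` and `ρ_B`
have the same nonzero spectrum, and `P↘` is obtained from `P` by merging first on one side, then on
the other.
-/

section Spectral

variable {𝕜 n : Type*} [RCLike 𝕜] [Fintype n] [DecidableEq n]

lemma map_norm_sq_mem_doublyStochastic {U : Matrix n n 𝕜} (hU : U ∈ unitaryGroup n 𝕜) :
    (U.map fun z => ‖z‖ ^ 2) ∈ doublyStochastic ℝ n := by
  refine mem_doublyStochastic_iff_sum.2 ⟨fun i j => sq_nonneg _, fun i => ?_, fun j => ?_⟩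
  · have h := congrFun₂ (mem_unitaryGroup_iff.1 hU) i i
    simp only [mul_apply, star_apply, RCLike.star_def, RCLike.mul_conj, one_apply_eq] at h
    exact_mod_cast h
  · have h := congrFun₂ (mem_unitaryGroup_iff'.1 hU) j j
    simp only [mul_apply, star_apply, RCLike.star_def, RCLike.conj_mul, one_apply_eq] at h
    exact_mod_cast h

lemma exists_doublyStochastic_mulVec_eigenvalues_eq_re_diag {A : Matrix n n 𝕜}
    (hA : A.IsHermitian) {U : Matrix n n 𝕜} (hU : U ∈ unitaryGroup n 𝕜) :
    ∃ D ∈ doublyStochastic ℝ n,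
      ∀ i, RCLike.re ((star U * A * U) i i) = (D *ᵥ hA.eigenvalues) i := by
  set V : Matrix n n 𝕜 := (hA.eigenvectorUnitary : Matrix n n 𝕜)
  set W : Matrix n n 𝕜 := star U * V with hW
  have hW_mem : W ∈ unitaryGroup n 𝕜 := mul_mem (Unitary.star_mem hU) hA.eigenvectorUnitary.2
  have hconj : star U * A * U = W * diagonal (RCLike.ofReal ∘ hA.eigenvalues) * star W := by
    conv_lhs => rw [hA.spectral_theorem, Unitary.conjStarAlgAut_apply]
    simp only [hW, V, star_mul, star_star, Matrix.mul_assoc]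
  refine ⟨_, map_norm_sq_mem_doublyStochastic hW_mem, fun i => ?_⟩
  rw [hconj, mul_apply, map_sum, mulVec, dotProduct]
  refine Finset.sum_congr rfl fun j _ => ?_
  rw [mul_diagonal, star_apply, RCLike.star_def, mul_right_comm, RCLike.mul_conj, map_apply,
    Function.comp_apply]
  norm_cast

/-- Peierls' inequality. -/
lemma sum_map_eigenvalues_le_sum_map_re_diag {s : Set ℝ} {φ : ℝ → ℝ} (hφ : ConcaveOn ℝ s φ)
    {A : Matrix n n 𝕜} (hA : A.IsHermitian) (hs : ∀ i, hA.eigenvalues i ∈ s)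
    {U : Matrix n n 𝕜} (hU : U ∈ unitaryGroup n 𝕜) :
    ∑ i, φ (hA.eigenvalues i) ≤ ∑ i, φ (RCLike.re ((star U * A * U) i i)) := by
  obtain ⟨D, hD, hdiag⟩ := exists_doublyStochastic_mulVec_eigenvalues_eq_re_diag hA hU
  calc ∑ j, φ (hA.eigenvalues j)
      = ∑ j, ∑ i, D i j • φ (hA.eigenvalues j) := by
        simp only [← Finset.sum_smul, sum_col_of_mem_doublyStochastic hD, one_smul]
    _ = ∑ i, ∑ j, D i j • φ (hA.eigenvalues j) := Finset.sum_comm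
    _ ≤ ∑ i, φ (∑ j, D i j • hA.eigenvalues j) := Finset.sum_le_sum fun i _ =>
        hφ.le_map_sum (fun _ _ => nonneg_of_mem_doublyStochastic hD)
          (sum_row_of_mem_doublyStochastic hD i) fun j _ => hs j
    _ = ∑ i, φ (RCLike.re ((star U * A * U) i i)) := by
        simp only [hdiag, mulVec, dotProduct, smul_eq_mul]

lemma exists_unitary_re_diag_eq_eigenvalues {A : Matrix n n 𝕜} (hA : A.IsHermitian) :
    ∃ U ∈ unitaryGroup n 𝕜, ∀ i, RCLike.re ((star U * A * U) i i) = hA.eigenvalues i := by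
  refine ⟨hA.eigenvectorUnitary, hA.eigenvectorUnitary.2, fun i => ?_⟩
  have hdiag := hA.conjStarAlgAut_star_eigenvectorUnitary
  rw [Unitary.conjStarAlgAut_star_apply] at hdiag
  rw [hdiag, diagonal_apply_eq, Function.comp_apply, RCLike.ofReal_re]

lemma re_diag_mem_of_eigenvalues_mem {s : Set ℝ} (hs : Convex ℝ s) {A : Matrix n n 𝕜}
    (hA : A.IsHermitian) (hAs : ∀ i, hA.eigenvalues i ∈ s) {U : Matrix n n 𝕜}
    (hU : U ∈ unitaryGroup n 𝕜) (i : n) : RCLike.re ((star U * A * U) i i) ∈ s := by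
  obtain ⟨D, hD, hdiag⟩ := exists_doublyStochastic_mulVec_eigenvalues_eq_re_diag hA hU
  rw [hdiag]
  exact hs.sum_mem (fun _ _ => nonneg_of_mem_doublyStochastic hD)
    (sum_row_of_mem_doublyStochastic hD i) fun j _ => hAs j

lemma sum_map_eigenvalues_concave {s : Set ℝ} {φ : ℝ → ℝ} (hφ : ConcaveOn ℝ s φ)
    {A B : Matrix n n 𝕜} {a b : ℝ} (hA : A.IsHermitian) (hB : B.IsHermitian)
    (hC : (a • A + b • B).IsHermitian) (hAs : ∀ i, hA.eigenvalues i ∈ s)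
    (hBs : ∀ i, hB.eigenvalues i ∈ s) (ha : 0 ≤ a) (hb : 0 ≤ b) (hab : a + b = 1) :
    a * ∑ i, φ (hA.eigenvalues i) + b * ∑ i, φ (hB.eigenvalues i) ≤
      ∑ i, φ (hC.eigenvalues i) := by
  obtain ⟨U, hU, heig⟩ := exists_unitary_re_diag_eq_eigenvalues hC
  have hlin (i : n) : RCLike.re ((star U * (a • A + b • B) * U) i i) =
      a • RCLike.re ((star U * A * U) i i) + b • RCLike.re ((star U * B * U) i i) := by
    simp [Matrix.mul_add, Matrix.add_mul, RCLike.smul_re]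
  calc a * ∑ i, φ (hA.eigenvalues i) + b * ∑ i, φ (hB.eigenvalues i)
      ≤ a * ∑ i, φ (RCLike.re ((star U * A * U) i i)) +
          b * ∑ i, φ (RCLike.re ((star U * B * U) i i)) :=
        add_le_add
          (mul_le_mul_of_nonneg_left (sum_map_eigenvalues_le_sum_map_re_diag hφ hA hAs hU) ha)
          (mul_le_mul_of_nonneg_left (sum_map_eigenvalues_le_sum_map_re_diag hφ hB hBs hU) hb)
    _ = ∑ i, (a • φ (RCLike.re ((star U * A * U) i i)) +
          b • φ (RCLike.re ((star U * B * U) i i))) := by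
        simp only [smul_eq_mul, Finset.mul_sum, Finset.sum_add_distrib]
    _ ≤ ∑ i, φ (hC.eigenvalues i) := Finset.sum_le_sum fun i _ => by
        rw [← heig, hlin]
        exact hφ.2 (re_diag_mem_of_eigenvalues_mem hφ.1 hA hAs hU i)
          (re_diag_mem_of_eigenvalues_mem hφ.1 hB hBs hU i) ha hb hab

end Spectral

section Entropy

open scoped ComplexOrder

variable {m n : Type*} [Fintype m] [Fintype n]

open scoped Classical in
lemma vNE_eq_sum_negMulLog {ρ : Matrix n n ℂ} (hρ : ρ.IsHermitian) :
    vNE ρ = (∑ i, Real.negMulLog (hρ.eigenvalues i)) / Real.log 2 := by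
  simp only [vNE, dif_pos hρ, Real.negMulLog, Real.logb, ← Finset.sum_neg_distrib, Finset.sum_div,
    neg_mul, neg_div, mul_div_assoc]

open scoped Classical in
lemma vNE_eq_sum_roots_charpoly {ρ : Matrix n n ℂ} (hρ : ρ.IsHermitian) :
    vNE ρ = (ρ.charpoly.roots.map fun z => Real.negMulLog z.re).sum / Real.log 2 := by
  rw [vNE_eq_sum_negMulLog hρ, hρ.roots_charpoly_eq_eigenvalues, Multiset.map_map]
  rfl

lemma vNE_transpose {ρ : Matrix n n ℂ} (hρ : ρ.IsHermitian) : vNE ρᵀ = vNE ρ := by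
  classical
  rw [vNE_eq_sum_roots_charpoly hρ, vNE_eq_sum_roots_charpoly hρ.transpose, charpoly_transpose]

lemma vNE_mul_comm {A : Matrix m n ℂ} {B : Matrix n m ℂ} (hAB : (A * B).IsHermitian)
    (hBA : (B * A).IsHermitian) : vNE (A * B) = vNE (B * A) := by
  classical
  rw [vNE_eq_sum_roots_charpoly hAB, vNE_eq_sum_roots_charpoly hBA]
  congr 1
  -- The two characteristic polynomials differ by a power of `X`, whose roots contribute `0`.
  have hroots := congrArg (fun p => (p.roots.map fun z : ℂ => Real.negMulLog z.re).sum)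
    (charpoly_mul_comm' A B)
  simpa [Polynomial.roots_mul, (charpoly_monic _).ne_zero, Polynomial.X_ne_zero,
    Multiset.map_nsmul, Multiset.sum_nsmul] using hroots

lemma concaveOn_vNE : ConcaveOn ℝ {ρ : Matrix n n ℂ | ρ.PosSemidef} vNE := by
  classical
  have hconvex : Convex ℝ {ρ : Matrix n n ℂ | ρ.PosSemidef} :=
    fun σ hσ τ hτ a b ha hb _ => (hσ.smul ha).add (hτ.smul hb)
  refine ⟨hconvex, fun σ hσ τ hτ a b ha hb hab => ?_⟩
  have hρ : (a • σ + b • τ).PosSemidef := hconvex hσ hτ ha hb hab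
  simp only [vNE_eq_sum_negMulLog hσ.1, vNE_eq_sum_negMulLog hτ.1, vNE_eq_sum_negMulLog hρ.1,
    smul_eq_mul, ← mul_div_assoc, ← add_div]
  exact div_le_div_of_nonneg_right
    (sum_map_eigenvalues_concave Real.concaveOn_negMulLog hσ.1 hτ.1 hρ.1
      hσ.eigenvalues_nonneg hτ.eigenvalues_nonneg ha hb hab)
    (Real.log_nonneg one_le_two)

lemma negMulLog_sum_le {ι : Type*} {s : Finset ι} {p : ι → ℝ} (hp : ∀ i ∈ s, 0 ≤ p i) :
    Real.negMulLog (∑ i ∈ s, p i) ≤ ∑ i ∈ s, Real.negMulLog (p i) := by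
  rw [Real.negMulLog, neg_mul, Finset.sum_mul, ← Finset.sum_neg_distrib]
  refine Finset.sum_le_sum fun i hi => ?_
  rw [Real.negMulLog, neg_mul, neg_le_neg_iff]
  rcases (hp i hi).eq_or_lt with h0 | hpos
  · simp [← h0]
  · have hle : p i ≤ ∑ j ∈ s, p j := Finset.single_le_sum hp hi
    gcongr

lemma negMulLog_trace_le_vNE {ρ : Matrix n n ℂ} (hρ : ρ.PosSemidef) :
    Real.negMulLog ρ.trace.re / Real.log 2 ≤ vNE ρ := by
  classical
  have htrace : ρ.trace.re = ∑ i, hρ.1.eigenvalues i := by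
    simp [hρ.1.trace_eq_sum_eigenvalues]
  rw [vNE_eq_sum_negMulLog hρ.1, htrace]
  exact div_le_div_of_nonneg_right (negMulLog_sum_le fun i _ => hρ.eigenvalues_nonneg i)
    (Real.log_nonneg one_le_two)

end Entropy

section Leakage

open scoped ComplexOrder

/-- The regular embedding `ψ_θ` as the matrix of its amplitudes. -/
def regEmbMatrix {X Y : Type*} (P θ : X × Y → ℝ) : Matrix X Y ℂ :=
  Matrix.of fun x y => regEmb P θ (x, y)

/-- The unnormalised pure state `|v⟩⟨v|` of the second party, where `v` is the row `x` of the
regular embedding `ψ_θ`. -/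
def rowState {X Y : Type*} (P θ : X × Y → ℝ) (x : X) : Matrix Y Y ℂ :=
  vecMulVec (regEmbMatrix P θ x) (star (regEmbMatrix P θ x))

variable {X Y : Type*}

lemma rhoA_eq_mul_conjTranspose [Fintype Y] (P θ : X × Y → ℝ) :
    rhoA P θ = regEmbMatrix P θ * (regEmbMatrix P θ)ᴴ := rfl

lemma rhoB_eq_transpose_conjTranspose_mul [Fintype X] (P θ : X × Y → ℝ) :
    rhoB P θ = ((regEmbMatrix P θ)ᴴ * regEmbMatrix P θ)ᵀ := by
  ext y y'
  simp [rhoB, regEmbMatrix, mul_apply, mul_comm]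

lemma rhoB_eq_sum_rowState [Fintype X] (P θ : X × Y → ℝ) : rhoB P θ = ∑ x, rowState P θ x := by
  ext y y'
  simp [rhoB, rowState, regEmbMatrix, Matrix.sum_apply, vecMulVec_apply]

lemma posSemidef_rhoB [Fintype X] [Finite Y] (P θ : X × Y → ℝ) : (rhoB P θ).PosSemidef := by
  rw [rhoB_eq_sum_rowState]
  exact posSemidef_sum _ fun x _ => posSemidef_vecMulVec_self_star _

lemma norm_regEmb (P θ : X × Y → ℝ) (xy : X × Y) : ‖regEmb P θ xy‖ = √(P xy) := by
  rw [regEmb, norm_mul, mul_comm Complex.I, Complex.norm_exp_ofReal_mul_I, one_mul,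
    Complex.norm_real, Real.norm_of_nonneg (Real.sqrt_nonneg _)]

variable [Fintype X] [Fintype Y]

lemma trace_rhoB (P θ : X × Y → ℝ) : (rhoB P θ).trace = ((∑ xy, √(P xy) ^ 2 : ℝ) : ℂ) := by
  simp only [trace, diag_apply, rhoB, of_apply, Complex.star_def, Complex.mul_conj',
    norm_regEmb, Fintype.sum_prod_type_right, Complex.ofReal_sum, Complex.ofReal_pow]

lemma vNE_rhoA_eq_vNE_rhoB (P θ : X × Y → ℝ) : vNE (rhoA P θ) = vNE (rhoB P θ) := by
  have hAB := isHermitian_mul_conjTranspose_self (regEmbMatrix P θ)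
  have hBA := isHermitian_conjTranspose_mul_self (regEmbMatrix P θ)
  rw [rhoA_eq_mul_conjTranspose, rhoB_eq_transpose_conjTranspose_mul, vNE_transpose hBA,
    vNE_mul_comm hAB hBA]

lemma mutualInfo_swap (P : X × Y → ℝ) : mutualInfo (P ∘ Prod.swap) = mutualInfo P := by
  rw [mutualInfo, Finset.sum_comm]
  simp only [mutualInfo, margX, margY, Function.comp_apply, Prod.swap_prod_mk, mul_comm]

lemma leakReg_swap (P θ : X × Y → ℝ) :
    leakReg (P ∘ Prod.swap) (θ ∘ Prod.swap) = leakReg P θ := by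
  rw [leakReg, leakReg, mutualInfo_swap, ← vNE_rhoA_eq_vNE_rhoB P θ]
  rfl

lemma leakPrim_swap (P : X × Y → ℝ) : leakPrim (P ∘ Prod.swap) = leakPrim P :=
  (((Equiv.prodComm Y X).arrowCongr (Equiv.refl ℝ)).symm.iInf_congr fun θ =>
    leakReg_swap P θ).symm

lemma bddBelow_range_leakReg (P : X × Y → ℝ) : BddBelow (Set.range (leakReg P)) := by
  refine ⟨Real.negMulLog (∑ xy, √(P xy) ^ 2) / Real.log 2 - mutualInfo P, ?_⟩
  rintro _ ⟨θ, rfl⟩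
  have hentropy := negMulLog_trace_le_vNE (posSemidef_rhoB P θ)
  rw [trace_rhoB, Complex.ofReal_re] at hentropy
  exact sub_le_sub_right hentropy _

end Leakage

section FiberWeights

/-- A family of conditional probability distributions, one on each fibre of `f`; in particular
`f` is surjective. -/
structure IsFiberWeight {X K : Type*} [Fintype X] [DecidableEq K] (f : X → K) (w : X → ℝ) :
    Prop where
  nonneg : ∀ x, 0 ≤ w x
  sum_fiber : ∀ k, ∑ x with f x = k, w x = 1

lemma exists_convex_weights {X : Type*} {s : Finset X} (hs : s.Nonempty) {m : X → ℝ}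
    (hm : ∀ x ∈ s, 0 ≤ m x) :
    ∃ w : X → ℝ, (∀ x ∈ s, 0 ≤ w x) ∧ ∑ x ∈ s, w x = 1 ∧ ∀ x ∈ s, m x = w x * ∑ x' ∈ s, m x' := by
  rcases eq_or_ne (∑ x ∈ s, m x) 0 with h0 | h0
  · refine ⟨fun _ => (s.card : ℝ)⁻¹, fun _ _ => by positivity, ?_, fun x hx => ?_⟩
    · rw [Finset.sum_const, nsmul_eq_mul,
        mul_inv_cancel₀ (Nat.cast_ne_zero.2 hs.card_ne_zero)]
    · rw [h0, mul_zero, (Finset.sum_eq_zero_iff_of_nonneg hm).1 h0 x hx]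
  · refine ⟨fun x => m x / ∑ x' ∈ s, m x',
      fun x hx => div_nonneg (hm x hx) (Finset.sum_nonneg hm), ?_,
      fun x _ => (div_mul_cancel₀ _ h0).symm⟩
    rw [← Finset.sum_div, div_self h0]

variable {X K : Type*} [Fintype X] [DecidableEq K] {f : X → K}

lemma exists_isFiberWeight (hf : Function.Surjective f) {m : X → ℝ} (hm : ∀ x, 0 ≤ m x) :
    ∃ w, IsFiberWeight f w ∧ ∀ x, m x = w x * ∑ x' with f x' = f x, m x' := by
  have hne (k : K) : (Finset.univ.filter fun x => f x = k).Nonempty :=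
    (hf k).imp fun x hx => by simp [hx]
  choose w hw0 hw1 hw using fun k => exists_convex_weights (hne k) fun x _ => hm x
  refine ⟨fun x => w (f x) x, ⟨fun x => hw0 _ x (by simp), fun k => ?_⟩,
    fun x => hw _ x (by simp)⟩
  rw [← hw1 k]
  exact Finset.sum_congr rfl fun x hx => by rw [(Finset.mem_filter.1 hx).2]

variable [Fintype K] {w : X → ℝ}

lemma IsFiberWeight.sum_mul_comp (hw : IsFiberWeight f w) (g : K → ℝ) :
    ∑ x, w x * g (f x) = ∑ k, g k := by
  rw [← Finset.sum_fiberwise Finset.univ f]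
  refine Finset.sum_congr rfl fun k _ => ?_
  rw [← one_mul (g k), ← hw.sum_fiber k, Finset.sum_mul]
  exact Finset.sum_congr rfl fun x hx => by rw [(Finset.mem_filter.1 hx).2]

open scoped Pointwise in
lemma IsFiberWeight.exists_section_map_sum_le (hw : IsFiberWeight f w) {E : Type*}
    [AddCommGroup E] [Module ℝ E] {s : Set E} {φ : E → ℝ} (hφ : ConcaveOn ℝ s φ) {R : X → E}
    (hR : ∀ c : K → X, Function.RightInverse c f → ∑ k, R (c k) ∈ s) :
    ∃ c : K → X, Function.RightInverse c f ∧ φ (∑ k, R (c k)) ≤ φ (∑ x, w x • R x) := by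
  set S : K → Set E := fun k => R '' {x | f x = k}
  have hsection : ∀ r ∈ ∑ k, S k, ∃ c, Function.RightInverse c f ∧ ∑ k, R (c k) = r := by
    intro r hr
    obtain ⟨g, hg, rfl⟩ := (Set.mem_fintype_sum _ _).1 hr
    choose c hc hcg using hg
    exact ⟨c, hc, Finset.sum_congr rfl fun k _ => hcg k⟩
  have hmem : ∑ x, w x • R x ∈ convexHull ℝ (∑ k, S k) := by
    rw [convexHull_sum, ← Finset.sum_fiberwise Finset.univ f]
    refine (Set.mem_fintype_sum _ _).2 ⟨_, fun k => ?_, rfl⟩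
    refine (convex_convexHull ℝ (S k)).sum_mem (fun x _ => hw.nonneg x) (hw.sum_fiber k) ?_
    exact fun x hx => subset_convexHull ℝ _ ⟨x, (Finset.mem_filter.1 hx).2, rfl⟩
  obtain ⟨r, hr, hle⟩ := hφ.exists_le_of_mem_convexHull (fun r hr => by
    obtain ⟨c, hc, rfl⟩ := hsection r hr
    exact hR c hc) hmem
  obtain ⟨c, hc, rfl⟩ := hsection r hr
  exact ⟨c, hc, hle⟩

end FiberWeights

section Split

/-- The primitive obtained from `Q` by splitting each symbol `k` of the first party into the
symbols `x` of its fibre under `f`, where `x` is drawn with conditional probability `w x`. -/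
def splitFst {X K Y : Type*} (f : X → K) (w : X → ℝ) (Q : K × Y → ℝ) : X × Y → ℝ :=
  fun xy => w xy.1 * Q (f xy.1, xy.2)

variable {X K Y : Type*} [Fintype X] {f : X → K} {w : X → ℝ}

lemma rhoB_splitFst (hw : ∀ x, 0 ≤ w x) (Q : K × Y → ℝ) (θ : X × Y → ℝ) :
    rhoB (splitFst f w Q) θ = ∑ x, w x • rowState (Q ∘ Prod.map f id) θ x := by
  rw [rhoB_eq_sum_rowState]
  refine Finset.sum_congr rfl fun x _ => ?_
  have hrow : regEmbMatrix (splitFst f w Q) θ x =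
      (√(w x) : ℂ) • regEmbMatrix (Q ∘ Prod.map f id) θ x := by
    ext y
    simp only [regEmbMatrix, of_apply, regEmb, splitFst, Real.sqrt_mul (hw x), Pi.smul_apply,
      Function.comp_apply, Prod.map_apply, id_eq, Complex.ofReal_mul, smul_eq_mul]
    ring
  have hsq : (√(w x) : ℂ) * √(w x) = w x := by
    rw [← Complex.ofReal_mul, Real.mul_self_sqrt (hw x)]
  rw [rowState, hrow, star_smul, smul_vecMulVec, vecMulVec_smul, smul_smul, Complex.star_def,
    Complex.conj_ofReal, hsq, Complex.coe_smul, rowState]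

variable [Fintype K] [DecidableEq K] [Fintype Y]

lemma IsFiberWeight.mutualInfo_splitFst (hw : IsFiberWeight f w) (Q : K × Y → ℝ) :
    mutualInfo (splitFst f w Q) = mutualInfo Q := by
  have hX (x : X) : margX (splitFst f w Q) x = w x * margX Q (f x) := by
    simp only [margX, splitFst, Finset.mul_sum]
  have hY : margY (splitFst f w Q) = margY Q :=
    funext fun y => hw.sum_mul_comp fun k => Q (k, y)
  rw [mutualInfo, mutualInfo, ← hw.sum_mul_comp]
  refine Finset.sum_congr rfl fun x _ => ?_
  rw [Finset.mul_sum]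
  refine Finset.sum_congr rfl fun y _ => ?_
  rw [hX, hY, splitFst]
  rcases eq_or_ne (w x) 0 with h0 | h0
  · simp [h0]
  · rw [mul_assoc (w x) (margX Q (f x)), mul_div_mul_left _ _ h0, mul_assoc]

lemma IsFiberWeight.exists_vNE_rhoB_le_splitFst (hw : IsFiberWeight f w) (Q : K × Y → ℝ)
    (θ : X × Y → ℝ) : ∃ θ' : K × Y → ℝ, vNE (rhoB Q θ') ≤ vNE (rhoB (splitFst f w Q) θ) := by
  have hpull {c : K → X} (hc : Function.RightInverse c f) :
      ∑ k, rowState (Q ∘ Prod.map f id) θ (c k) = rhoB Q (θ ∘ Prod.map c id) := by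
    rw [rhoB_eq_sum_rowState]
    refine Finset.sum_congr rfl fun k _ => ?_
    have hrow : regEmbMatrix (Q ∘ Prod.map f id) θ (c k) =
        regEmbMatrix Q (θ ∘ Prod.map c id) k := by
      ext y
      simp [regEmbMatrix, regEmb, hc k]
    rw [rowState, hrow, rowState]
  obtain ⟨c, hc, hle⟩ := hw.exists_section_map_sum_le concaveOn_vNE
    (R := rowState (Q ∘ Prod.map f id) θ) fun c hc => hpull hc ▸ posSemidef_rhoB Q _
  exact ⟨θ ∘ Prod.map c id, by rwa [rhoB_splitFst hw.nonneg, ← hpull hc]⟩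

lemma IsFiberWeight.leakPrim_le_leakPrim_splitFst (hw : IsFiberWeight f w) (Q : K × Y → ℝ) :
    leakPrim Q ≤ leakPrim (splitFst f w Q) := by
  refine le_ciInf fun θ => ?_
  obtain ⟨θ', hθ'⟩ := hw.exists_vNE_rhoB_le_splitFst Q θ
  calc leakPrim Q ≤ leakReg Q θ' := ciInf_le (bddBelow_range_leakReg Q) θ'
    _ ≤ leakReg (splitFst f w Q) θ := by
        rw [leakReg, leakReg, hw.mutualInfo_splitFst]
        exact sub_le_sub_right hθ' _

end Split

section Merge

lemma fX_mul_margX {X Y : Type*} [Fintype Y] {P : X × Y → ℝ} (hP : ∀ xy, 0 ≤ P xy)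
    (x : X) (y : Y) :    fX P x y * margX P x = P (x, y) :=
  div_mul_cancel_of_imp fun h =>
    (Finset.sum_eq_zero_iff_of_nonneg fun y _ => hP (x, y)).1 h y (Finset.mem_univ y)

/-- The joint distribution of `(f(X), Y)`. -/
def mergeFst {X K Y : Type*} [Fintype X] [DecidableEq K] (f : X → K) (P : X × Y → ℝ) :
    K × Y → ℝ :=
  fun ky => ∑ x with f x = ky.1, P (x, ky.2)

/-- The joint distribution of `(X, g(Y))`. -/
def mergeSnd {X Y L : Type*} [Fintype Y] [DecidableEq L] (g : Y → L) (P : X × Y → ℝ) :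
    X × L → ℝ :=
  fun xl => ∑ y with g y = xl.2, P (xl.1, y)

variable {X K Y L : Type*} [Fintype X] [DecidableEq K] {f : X → K} {P : X × Y → ℝ}

lemma fY_mergeFst [Fintype K] (f : X → K) (P : X × Y → ℝ) (y : Y) :
    fY (mergeFst f P) y = fun k => ∑ x with f x = k, fY P y x := by
  have hmarg : margY (mergeFst f P) y = margY P y :=
    Finset.sum_fiberwise Finset.univ f fun x => P (x, y)
  ext k
  simp only [fY, hmarg, mergeFst, Finset.sum_div]

variable [Fintype Y]

lemma exists_splitFst_mergeFst_eq (hP : ∀ xy, 0 ≤ P xy) (hf : Function.Surjective f)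
    (hfP : (fX P).FactorsThrough f) :
    ∃ w, IsFiberWeight f w ∧ splitFst f w (mergeFst f P) = P := by
  obtain ⟨w, hw, hmarg⟩ := exists_isFiberWeight hf (m := margX P)
    fun x => Finset.sum_nonneg fun y _ => hP (x, y)
  refine ⟨w, hw, funext fun ⟨x, y⟩ => ?_⟩
  have hrow : mergeFst f P (f x, y) = fX P x y * ∑ x' with f x' = f x, margX P x' := by
    rw [mergeFst, Finset.mul_sum]
    refine Finset.sum_congr rfl fun x' hx' => ?_
    rw [← fX_mul_margX hP, hfP (Finset.mem_filter.1 hx').2]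
  rw [splitFst, hrow, mul_left_comm, ← hmarg, fX_mul_margX hP]

theorem leakPrim_mergeFst_le [Fintype K] (hP : ∀ xy, 0 ≤ P xy) (hf : Function.Surjective f)
    (hfP : (fX P).FactorsThrough f) : leakPrim (mergeFst f P) ≤ leakPrim P := by
  obtain ⟨w, hw, hsplit⟩ := exists_splitFst_mergeFst_eq hP hf hfP
  exact (hw.leakPrim_le_leakPrim_splitFst _).trans_eq (congrArg leakPrim hsplit)

theorem leakPrim_mergeSnd_le [Fintype L] [DecidableEq L] {g : Y → L} (hP : ∀ xy, 0 ≤ P xy)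
    (hg : Function.Surjective g) (hgP : (fY P).FactorsThrough g) :
    leakPrim (mergeSnd g P) ≤ leakPrim P := by
  have hswap : mergeSnd g P ∘ Prod.swap = mergeFst g (P ∘ Prod.swap) := rfl
  rw [← leakPrim_swap (mergeSnd g P), ← leakPrim_swap P, hswap]
  exact leakPrim_mergeFst_le (fun _ => hP _) hg hgP

end Merge

section DependentPart

/-- `F` as a map onto its image, in the form used by `depPrim`: for `F = fX P` it is the
random variable `X↘Y`, for `F = fY P` it is `Y↘X`. -/
def imageFactorization {α β : Type*} [Fintype α] [DecidableEq β] (F : α → β) (a : α) :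
    ↥(Finset.image F Finset.univ) :=
  ⟨F a, Finset.mem_image_of_mem F (Finset.mem_univ a)⟩

variable {α β : Type*} [Fintype α] [DecidableEq β]

lemma surjective_imageFactorization (F : α → β) : Function.Surjective (imageFactorization F) := by
  rintro ⟨b, hb⟩
  obtain ⟨a, -, rfl⟩ := Finset.mem_image.1 hb
  exact ⟨a, rfl⟩

lemma factorsThrough_imageFactorization (F : α → β) : F.FactorsThrough (imageFactorization F) :=
  fun _ _ h => congrArg Subtype.val h

lemma depPrim_eq_mergeSnd_mergeFst {X Y : Type*} [Fintype X] [Fintype Y] (P : X × Y → ℝ) :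
    depPrim P =
      mergeSnd (imageFactorization (fY P)) (mergeFst (imageFactorization (fX P)) P) := by
  ext kl
  simp only [depPrim, mergeSnd, mergeFst, imageFactorization, Subtype.ext_iff]
  exact Finset.sum_comm

end DependentPart

theorem leakPrim_ge_leakPrim_depPrim_general {𝒳 𝒴 : Type*} [Fintype 𝒳] [Fintype 𝒴]
    (P : 𝒳 × 𝒴 → ℝ) (hP : ∀ xy, 0 ≤ P xy) : leakPrim (depPrim P) ≤ leakPrim P := by
  set Q := mergeFst (imageFactorization (fX P)) P
  have hQ : ∀ ky, 0 ≤ Q ky := fun _ => Finset.sum_nonneg fun _ _ => hP _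
  have hQY : (fY Q).FactorsThrough (imageFactorization (fY P)) := fun y y' h => by
    rw [fY_mergeFst, fY_mergeFst, factorsThrough_imageFactorization _ h]
  calc leakPrim (depPrim P)
      = leakPrim (mergeSnd (imageFactorization (fY P)) Q) := by rw [depPrim_eq_mergeSnd_mergeFst]
    _ ≤ leakPrim Q := leakPrim_mergeSnd_le hQ (surjective_imageFactorization _) hQY
    _ ≤ leakPrim P := leakPrim_mergeFst_le hP (surjective_imageFactorization _)
        (factorsThrough_imageFactorization _)

/-- For any primitive `P`, the leakage of `P` is at least the leakage of
the primitive `P↘` of its dependent parts: `Δ_P ≥ Δ_{P↘}`. -/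
theorem leakPrim_ge_leakPrim_depPrim
    {𝒳 𝒴 : Type*} [Fintype 𝒳] [Fintype 𝒴] [Nonempty 𝒳] [Nonempty 𝒴]
    (P : 𝒳 × 𝒴 → ℝ) (hP0 : ∀ xy, 0 ≤ P xy) (hP1 : ∑ xy, P xy = 1) :
    leakPrim (depPrim P) ≤ leakPrim P := leakPrim_ge_leakPrim_depPrim_general P hP0
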